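/- arXiv:2601.08359 — 3 statements merged into one kernel-verified Lean document; each statement's English description precedes it below -/
import Mathlib

section
/- Let S ⊆ [0,1] with dim_H(S) < 1/2, the Hausdorff dimension taken with respect to the Euclidean metric on ℝ. Then Player II has a winning strategy in the dyadic intervals intersection game with target set S: there exists a function s_II assigning a bit to every finite binary sequence of odd length such that for every play x : ℕ → {0,1} consistent with s_II, the point Σ_{n∈ℕ} x(n)·2^(−(n+1)) does not belong to S. -/
open Set Filter
open scoped ENNReal

namespace DyadicGame

open Classical in
/-- The total weight of the words `w i` extending `s`, a word of length `n` having weight `r ^ n`. -/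
noncomputable def potential {ι : Type*} (r : ℝ≥0∞) (w : ι → List Bool) (s : List Bool) : ℝ≥0∞ :=
  ∑' i, if s <+: w i then r ^ (w i).length else 0

variable {ι : Type*} (r : ℝ≥0∞) (w : ι → List Bool)

lemma not_append_false_prefix {s t : List Bool} (h : s ++ [true] <+: t) :
    ¬ s ++ [false] <+: t := by
  intro h'
  have := List.prefix_of_prefix_length_le h h' (by simp)
  simp at this

lemma potential_append_add_le (s : List Bool) :
    potential r w (s ++ [true]) + potential r w (s ++ [false]) ≤ potential r w s := by
  unfold potential
  rw [← ENNReal.tsum_add]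
  refine ENNReal.tsum_le_tsum fun i => ?_
  by_cases h : s <+: w i
  · by_cases ht : s ++ [true] <+: w i
    · simp [h, ht, not_append_false_prefix ht]
    · rw [if_neg ht, if_pos h, zero_add]
      split_ifs <;> simp
  · have h1 : ∀ b, ¬ s ++ [b] <+: w i := fun b hb => h ((List.prefix_append s [b]).trans hb)
    simp [h, h1]

lemma potential_append_le (s : List Bool) (b : Bool) :
    potential r w (s ++ [b]) ≤ potential r w s := by
  refine le_trans ?_ (potential_append_add_le r w s)
  cases b
  · exact le_add_self
  · exact le_self_add

lemma pow_length_le_potential (i : ι) : r ^ (w i).length ≤ potential r w (w i) := by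
  unfold potential
  refine le_trans ?_ (ENNReal.le_tsum i)
  simp

lemma potential_nil : potential r w [] = ∑' i, r ^ (w i).length := by
  simp [potential]

open Classical in
/-- The strategy moving towards the half of smaller potential. -/
noncomputable def greedy (s : List Bool) : Bool :=
  decide (potential r w (s ++ [true]) ≤ potential r w (s ++ [false]))

lemma two_mul_potential_greedy_le (s : List Bool) :
    2 * potential r w (s ++ [greedy r w s]) ≤ potential r w s := by
  refine le_trans ?_ (potential_append_add_le r w s)
  rw [two_mul]
  by_cases h : potential r w (s ++ [true]) ≤ potential r w (s ++ [false])
  · have : greedy r w s = true := by simpa [greedy] using h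
    rw [this]
    gcongr
  · have : greedy r w s = false := by simpa [greedy] using h
    rw [this]
    gcongr
    exact (not_le.mp h).le

/-- The first `n` moves of a play. -/
def initial (x : ℕ → Bool) (n : ℕ) : List Bool := List.ofFn fun i : Fin n => x i

lemma initial_succ (x : ℕ → Bool) (n : ℕ) : initial x (n + 1) = initial x n ++ [x n] := by
  rw [initial, List.ofFn_succ_last]
  rfl

@[simp] lemma length_initial (x : ℕ → Bool) (n : ℕ) : (initial x n).length = n := by
  simp [initial]

variable {r w}

lemma potential_initial_even_lt (hr : 2 * r ^ 2 = 1) (hw : ∑' i, r ^ (w i).length < r)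
    {x : ℕ → Bool} (hx : ∀ n, Odd n → x n = greedy r w (initial x n)) (m : ℕ) :
    potential r w (initial x (2 * m)) < r ^ (2 * m + 1) := by
  induction m with
  | zero => simpa [initial, potential_nil] using hw
  | succ m ih =>
    have h1 : potential r w (initial x (2 * m + 1)) < r ^ (2 * m + 1) := by
      rw [initial_succ]
      exact (potential_append_le _ _ _ _).trans_lt ih
    have h2 := two_mul_potential_greedy_le r w (initial x (2 * m + 1))
    rw [← hx (2 * m + 1) ⟨m, rfl⟩, ← initial_succ] at h2
    have h3 : r ^ (2 * m + 1) = 2 * r ^ (2 * (m + 1) + 1) := by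
      calc r ^ (2 * m + 1) = (2 * r ^ 2) * r ^ (2 * m + 1) := by rw [hr, one_mul]
        _ = _ := by ring
    rw [h3] at h1
    exact lt_of_mul_lt_mul_left' (h2.trans_lt h1)

/-- If the weights of the forbidden words are summable with sum less than `r = 1 / √2`, the greedy
strategy avoids every forbidden word. -/
lemma initial_ne_of_greedy (hr : 2 * r ^ 2 = 1) (hr1 : r ≤ 1) (hw : ∑' i, r ^ (w i).length < r)
    {x : ℕ → Bool} (hx : ∀ n, Odd n → x n = greedy r w (initial x n)) (n : ℕ) (i : ι) :
    initial x n ≠ w i := by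
  intro h
  have hlen : (w i).length = n := by rw [← h, length_initial]
  have hge := pow_length_le_potential r w i
  rw [hlen, ← h] at hge
  refine hge.not_gt ?_
  rcases Nat.even_or_odd' n with ⟨m, rfl | rfl⟩
  · exact (potential_initial_even_lt hr hw hx m).trans_le (pow_le_pow_right_of_le_one' hr1 (by simp))
  · rw [initial_succ]
    exact (potential_append_le _ _ _ _).trans_lt (potential_initial_even_lt hr hw hx m)

/-- The integer with binary digits `x 0, …, x (n - 1)`. -/
def prefixValue (x : ℕ → Bool) : ℕ → ℕ
  | 0 => 0
  | n + 1 => 2 * prefixValue x n + (x n).toNat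

lemma initial_eq_of_prefixValue_eq {x y : ℕ → Bool} {n : ℕ}
    (h : prefixValue x n = prefixValue y n) : initial x n = initial y n := by
  induction n with
  | zero => simp [initial]
  | succ n ih =>
    simp only [prefixValue] at h
    have hx := Bool.toNat_lt (x n)
    have hy := Bool.toNat_lt (y n)
    have h2 : (x n).toNat = (y n).toNat := by omega
    rw [initial_succ, initial_succ, ih (by omega)]
    congr 2
    revert h2
    cases x n <;> cases y n <;> simp

lemma sum_range_eq_prefixValue (x : ℕ → Bool) (n : ℕ) :
    ∑ k ∈ Finset.range n, ((x k).toNat : ℝ) / 2 ^ (k + 1) = prefixValue x n / 2 ^ n := by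
  induction n with
  | zero => simp [prefixValue]
  | succ n ih =>
    rw [Finset.sum_range_succ, ih, prefixValue]
    push_cast
    field_simp
    ring

lemma tsum_mem_Icc (x : ℕ → Bool) (n : ℕ) :
    (∑' k : ℕ, ((x k).toNat : ℝ) / 2 ^ (k + 1)) * 2 ^ n ∈
      Icc (prefixValue x n : ℝ) (prefixValue x n + 1) := by
  have hg : HasSum (fun k : ℕ => (1 : ℝ) / 2 / 2 ^ k) 1 := hasSum_geometric_two' 1
  have hle : ∀ k, ((x k).toNat : ℝ) / 2 ^ (k + 1) ≤ 1 / 2 / 2 ^ k := fun k => by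
    have : ((x k).toNat : ℝ) ≤ 1 := by exact_mod_cast Bool.toNat_le (x k)
    rw [div_div, ← pow_succ']
    gcongr
  have hs : Summable fun k : ℕ => ((x k).toNat : ℝ) / 2 ^ (k + 1) :=
    Summable.of_nonneg_of_le (fun k => by positivity) hle hg.summable
  have hs' := (summable_nat_add_iff n).mpr hs
  have hg' : HasSum (fun k : ℕ => (1 : ℝ) / 2 / 2 ^ k * (1 / 2 ^ n)) (1 * (1 / 2 ^ n)) :=
    hg.mul_right _
  have htail : ∑' k : ℕ, ((x (k + n)).toNat : ℝ) / 2 ^ (k + n + 1) ≤ 1 * (1 / 2 ^ n) := by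
    rw [← hg'.tsum_eq]
    refine hs'.tsum_le_tsum (fun k => (hle (k + n)).trans_eq ?_) hg'.summable
    rw [pow_add]
    field_simp
  have htail0 : 0 ≤ ∑' k : ℕ, ((x (k + n)).toNat : ℝ) / 2 ^ (k + n + 1) :=
    tsum_nonneg fun k => by positivity
  rw [← hs.sum_add_tsum_nat_add n, sum_range_eq_prefixValue, add_mul,
    div_mul_cancel₀ _ (by positivity)]
  have hp : (0 : ℝ) < 2 ^ n := by positivity
  constructor
  · have := mul_nonneg htail0 hp.le
    linarith
  · have := mul_le_mul_of_nonneg_right htail hp.le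
    rw [one_mul, one_div, inv_mul_cancel₀ hp.ne'] at this
    linarith

/-- Four words of length `n` contain the length-`n` prefixes of all binary expansions of points at
distance at most `2 ^ (-n)` from `u`. -/
lemma exists_words_near (u : ℝ) (n : ℕ) :
    ∃ W : Fin 4 → List Bool, (∀ j, (W j).length = n) ∧ ∀ x : ℕ → Bool,
      |(∑' k : ℕ, ((x k).toNat : ℝ) / 2 ^ (k + 1)) - u| * 2 ^ n ≤ 1 →
        ∃ j, initial x n = W j := by
  have key : ∀ j : Fin 4, ∃ l : List Bool, l.length = n ∧ ∀ x : ℕ → Bool,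
      (prefixValue x n : ℤ) = ⌊u * 2 ^ n⌋ + j - 2 → initial x n = l := fun j => by
    by_cases h : ∃ y : ℕ → Bool, (prefixValue y n : ℤ) = ⌊u * 2 ^ n⌋ + j - 2
    · obtain ⟨y, hy⟩ := h
      exact ⟨initial y n, length_initial y n, fun x hx =>
        initial_eq_of_prefixValue_eq (by omega)⟩
    · push Not at h
      exact ⟨List.replicate n true, by simp, fun x hx => absurd hx (h x)⟩
  choose W hW hW' using key
  refine ⟨W, hW, fun x hx => ?_⟩
  obtain ⟨h1, h2⟩ := tsum_mem_Icc x n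
  set y := ∑' k : ℕ, ((x k).toNat : ℝ) / 2 ^ (k + 1)
  have hp : (0 : ℝ) < 2 ^ n := by positivity
  rw [← abs_of_pos hp, ← abs_mul, abs_le, sub_mul] at hx
  have h3 := Int.floor_le (u * 2 ^ n)
  have h4 := Int.lt_floor_add_one (u * 2 ^ n)
  have h5 : ⌊u * 2 ^ n⌋ - 2 ≤ (prefixValue x n : ℤ) := by
    have : ((⌊u * 2 ^ n⌋ - 2 : ℤ) : ℝ) ≤ ((prefixValue x n : ℤ) : ℝ) := by
      push_cast
      linarith [hx.1]
    exact_mod_cast this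
  have h6 : (prefixValue x n : ℤ) < ⌊u * 2 ^ n⌋ + 2 := by
    have : ((prefixValue x n : ℤ) : ℝ) < ((⌊u * 2 ^ n⌋ + 2 : ℤ) : ℝ) := by
      push_cast
      linarith [hx.2]
    exact_mod_cast this
  refine ⟨⟨((prefixValue x n : ℤ) - (⌊u * 2 ^ n⌋ - 2)).toNat, by omega⟩, hW' _ x ?_⟩
  simp only
  omega

/-- A set of Hausdorff dimension less than `d` has covers of arbitrarily small `d`-cost. -/
lemma exists_cover_of_dimH_lt {X : Type*} [EMetricSpace X] {S : Set X} {d : NNReal}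
    (hd : 0 < d) (h : dimH S < d) {ε : ℝ≥0∞} (hε : 0 < ε) :
    ∃ t : ℕ → Set X, S ⊆ ⋃ n, t n ∧ ∑' n, Metric.ediam (t n) ^ (d : ℝ) < ε := by
  borelize X
  have h0 : MeasureTheory.Measure.hausdorffMeasure (d : ℝ) S = 0 := hausdorffMeasure_of_dimH_lt h
  rw [MeasureTheory.Measure.hausdorffMeasure_apply] at h0
  have h1 := (iSup₂_le_iff.mp h0.le 1 one_pos).trans_lt hε
  simp only [iInf_lt_iff] at h1
  obtain ⟨t, ht, -, hlt⟩ := h1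
  refine ⟨t, ht, lt_of_le_of_lt (ENNReal.tsum_le_tsum fun n => ?_) hlt⟩
  rcases (t n).eq_empty_or_nonempty with hn | hn
  · simp [hn, hd]
  · exact le_iSup_of_le hn le_rfl

/-- A dyadic scale `n` adapted to a diameter `a`, up to an error `δ`. -/
lemma exists_scale {r : ℝ≥0∞} (hr : 2 * r ^ 2 = 1) (hr1 : r < 1) {a δ : ℝ≥0∞} (hδ : 0 < δ)
    (ha : a ^ (1 / 2 : ℝ) + δ ≤ 1) :
    ∃ n : ℕ, a * 2 ^ n ≤ 1 ∧ r ^ n ≤ 2 * (a ^ (1 / 2 : ℝ) + δ) := by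
  set ρ := a ^ (1 / 2 : ℝ) + δ
  have hex : ∃ n : ℕ, r ^ n < ρ := by
    have := ENNReal.tendsto_pow_atTop_nhds_zero_of_lt_one hr1
    exact (this.eventually_lt_const (hδ.trans_le le_add_self)).exists
  classical
  obtain ⟨m, hm⟩ : ∃ m, Nat.find hex = m + 1 := by
    refine Nat.exists_eq_succ_of_ne_zero fun h0 => ?_
    have := Nat.find_spec hex
    rw [h0, pow_zero] at this
    exact this.not_ge ha
  have hlt : r ^ (m + 1) < ρ := hm ▸ Nat.find_spec hex
  have hge : ρ ≤ r ^ m := not_lt.mp (Nat.find_min hex (by omega))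
  refine ⟨m, ?_, ?_⟩
  · have h1 : a = (a ^ (1 / 2 : ℝ)) ^ 2 := by
      rw [← ENNReal.rpow_natCast, ← ENNReal.rpow_mul]
      norm_num
    calc a * 2 ^ m = (a ^ (1 / 2 : ℝ)) ^ 2 * 2 ^ m := by rw [← h1]
      _ ≤ (r ^ m) ^ 2 * 2 ^ m := by
        gcongr
        exact le_self_add.trans hge
      _ = (2 * r ^ 2) ^ m := by rw [mul_pow]; ring
      _ = 1 := by rw [hr, one_pow]
  · calc r ^ m = (2 * r ^ 2) * r ^ m := by rw [hr, one_mul]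
      _ = 2 * r * r ^ (m + 1) := by ring
      _ ≤ 2 * 1 * ρ := by gcongr
      _ = 2 * ρ := by rw [mul_one]

lemma two_mul_inv_sqrt_two_sq : 2 * ((2 : ℝ≥0∞) ^ (-(1 / 2) : ℝ)) ^ 2 = 1 := by
  rw [← ENNReal.rpow_natCast, ← ENNReal.rpow_mul]
  norm_num
  rw [ENNReal.rpow_neg_one]
  exact ENNReal.mul_inv_cancel (by simp) (by simp)

lemma exists_forbidden_words {S : Set ℝ} (hdim : dimH S < 1 / 2) {r : ℝ≥0∞}
    (hr : 2 * r ^ 2 = 1) (hr1 : r < 1) :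
    ∃ w : ℕ × Fin 4 → List Bool, ∑' i, r ^ (w i).length < r ∧ ∀ x : ℕ → Bool,
      (∑' k : ℕ, ((x k).toNat : ℝ) / 2 ^ (k + 1)) ∈ S → ∃ n i, initial x n = w i := by
  have hr0 : r ≠ 0 := by rintro rfl; simp at hr
  set ε : ℝ≥0∞ := r / 16
  have hε : 0 < ε := ENNReal.div_pos hr0 (by simp)
  have hεr : 16 * ε = r := ENNReal.mul_div_cancel (by simp) (by simp)
  have hε2 : ε + ε ≤ 1 := by
    calc ε + ε = 2 * ε := by ring
      _ ≤ 16 * ε := by gcongr; norm_num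
      _ ≤ 1 := hεr ▸ hr1.le
  obtain ⟨t, ht, hsum⟩ := exists_cover_of_dimH_lt (S := S) (d := 1 / 2) (by norm_num)
    (by simpa using hdim) hε
  obtain ⟨δ, hδ, hδsum⟩ := ENNReal.exists_pos_sum_of_countable' hε.ne' ℕ
  have hd : ((1 / 2 : NNReal) : ℝ) = 1 / 2 := by norm_num
  rw [hd] at hsum
  have hscale := fun i => exists_scale hr hr1 (a := Metric.ediam (t i)) (hδ i)
    ((add_le_add ((ENNReal.le_tsum i).trans hsum.le)
      ((ENNReal.le_tsum i).trans hδsum.le)).trans hε2)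
  choose n hn hn' using hscale
  have hu : ∀ i, ∃ u : ℝ, (t i).Nonempty → u ∈ t i := fun i => by
    rcases (t i).eq_empty_or_nonempty with h | ⟨u, hu⟩
    · exact ⟨0, by simp [h]⟩
    · exact ⟨u, fun _ => hu⟩
  choose u hu using hu
  choose W hW hW' using fun i => exists_words_near (u i) (n i)
  refine ⟨fun p => W p.1 p.2, ?_, fun x hx => ?_⟩
  · rw [ENNReal.tsum_prod (f := fun i j => r ^ (W i j).length)]
    simp only [hW, tsum_fintype, Finset.sum_const, Finset.card_univ, Fintype.card_fin, nsmul_eq_mul]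
    rw [ENNReal.tsum_mul_left]
    calc ((4 : ℕ) : ℝ≥0∞) * ∑' i, r ^ n i
        ≤ (4 : ℕ) * ∑' i, 2 * (Metric.ediam (t i) ^ (1 / 2 : ℝ) + δ i) := by
          gcongr with i
          exact hn' i
      _ = 8 * (∑' i, Metric.ediam (t i) ^ (1 / 2 : ℝ) + ∑' i, δ i) := by
          rw [ENNReal.tsum_mul_left, ENNReal.tsum_add, ← mul_assoc]
          norm_num
      _ < 8 * (ε + ε) :=
          (ENNReal.mul_lt_mul_iff_right (by simp) (by simp)).mpr (ENNReal.add_lt_add hsum hδsum)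
      _ = r := by rw [← hεr]; ring
  · obtain ⟨i, hi⟩ := mem_iUnion.mp (ht hx)
    obtain ⟨j, hj⟩ := hW' i x (by
      have h1 := (mul_le_mul_left (Metric.edist_le_ediam_of_mem hi (hu i ⟨_, hi⟩)) (2 ^ n i)).trans
        (hn i)
      rw [edist_dist, Real.dist_eq] at h1
      have h2 := ENNReal.toReal_mono ENNReal.one_ne_top h1
      simpa using h2)
    exact ⟨n i, (i, j), hj⟩

end DyadicGame

open DyadicGame in
/-- If `S ⊆ [0,1]` has Hausdorff dimension `< 1/2` (for the Euclidean metric on `ℝ`), then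
Player II has a winning strategy in the dyadic intervals intersection game with target `S`:
identifying the choice of the left/right half with the bits `0`/`1`, there is a strategy
`sII` for the odd stages such that every consistent play `x` produces a point
`Σ x(n)·2^{-(n+1)}` outside `S`. -/
theorem playerII_wins_dyadic_intervals_game (S : Set ℝ) (hS : S ⊆ Set.Icc (0 : ℝ) 1)
    (hdim : dimH S < 1 / 2) :
    ∃ sII : List Bool → Bool, ∀ x : ℕ → Bool,
      (∀ n : ℕ, Odd n → x n = sII (List.ofFn fun i : Fin n => x i)) →
      (∑' n : ℕ, ((x n).toNat : ℝ) / 2 ^ (n + 1)) ∉ S := by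
  have hr := two_mul_inv_sqrt_two_sq
  have hr1 : (2 : ℝ≥0∞) ^ (-(1 / 2) : ℝ) < 1 :=
    ENNReal.rpow_lt_one_of_one_lt_of_neg (by norm_num) (by norm_num)
  obtain ⟨w, hw, hcover⟩ := exists_forbidden_words hdim hr hr1
  refine ⟨greedy ((2 : ℝ≥0∞) ^ (-(1 / 2) : ℝ)) w, fun x hx hxS => ?_⟩
  obtain ⟨n, i, hi⟩ := hcover x hxS
  exact initial_ne_of_greedy hr hr1.le hw hx n i hi
end

section
/- Let (X,d) be a complete metric space that is doubling with some constant D ∈ ℕ, let α, β ∈ (0,1), and let S ⊆ X. Suppose there exist a point x̃ ∈ X, a radius ρ̃ > 0, and an integer m ≥ 1 such that for every ρ ∈ (0, ρ̃) and every y ∈ X with B̄(y,ρ) ⊆ B̄(x̃,ρ̃), there exist points z₁,…,z_m ∈ X with B̄(z_j, β·ρ) ⊆ B̄(y,ρ) for each j and with the interiors of the closed balls B̄(z_j, β·ρ) pairwise disjoint. If dim_H(S) < log(m) / log(1/(α·β)), then Player II has a winning strategy in the (α,β)-Schmidt game with target set S. -/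
open Metric Set
open scoped ENNReal

/-- `X` is a doubling metric space with doubling constant `D`. -/
def IsDoublingWith (X : Type*) [PseudoMetricSpace X] (D : ℕ) : Prop :=
  ∀ (x : X) (r : ℝ), 0 < r → ∃ t : Finset X, t.card ≤ D ∧
    closedBall x r ⊆ ⋃ y ∈ t, closedBall y (r / 2)

/-- The radius `ρ_n = α^(⌊n/2⌋+1) · β^(⌈n/2⌉) · ρ₋₁` of the ball chosen at stage `n` of the
`(α,β)`-Schmidt game that starts with a ball of radius `ρinit` (Player I shrinks by `α` at
even stages, Player II by `β` at odd stages). -/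
noncomputable def rho (α β ρinit : ℝ) (n : ℕ) : ℝ := α ^ (n / 2 + 1) * β ^ ((n + 1) / 2) * ρinit

variable {X : Type*} [MetricSpace X]

/-- The ball chosen at stage `k` of the play `y` is contained in the previously chosen ball
(with the ball of radius `ρinit` around `c` chosen by Player II before stage `0`). -/
def AdmAt (α β : ℝ) (c : X) (ρinit : ℝ) (y : ℕ → X) (k : ℕ) : Prop :=
  closedBall (y k) (rho α β ρinit k) ⊆
    if k = 0 then closedBall c ρinit else closedBall (y (k - 1)) (rho α β ρinit (k - 1))

/-- The play `y` is admissible before stage `n`. -/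
def AdmUpTo (α β : ℝ) (c : X) (ρinit : ℝ) (y : ℕ → X) (n : ℕ) : Prop :=
  ∀ k < n, AdmAt α β c ρinit y k

/-- A doubling space covers each ball of radius `r` by `D ^ k` balls of radius `r / 2 ^ k`. -/
theorem IsDoublingWith.exists_cover {D : ℕ} (hD : IsDoublingWith X D) (k : ℕ) :
    ∀ (x : X) (r : ℝ), 0 < r → ∃ t : Finset X, t.card ≤ D ^ k ∧
      closedBall x r ⊆ ⋃ y ∈ t, closedBall y (r / 2 ^ k) := by
  classical
  induction k with
  | zero => intro x r _; exact ⟨{x}, by simp, by simp⟩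
  | succ k ih =>
    intro x r hr
    obtain ⟨t, htc, ht⟩ := hD x r hr
    choose g hgc hg using fun y => ih y (r / 2) (by positivity)
    refine ⟨t.biUnion g, ?_, fun p hp => ?_⟩
    · refine (Finset.card_biUnion_le_card_mul _ _ _ fun y _ => hgc y).trans ?_
      rw [pow_succ']
      exact Nat.mul_le_mul_right _ htc
    · obtain ⟨y, hy, hpy⟩ := mem_iUnion₂.1 (ht hp)
      obtain ⟨z, hz, hpz⟩ := mem_iUnion₂.1 (hg y hpy)
      refine mem_iUnion₂.2 ⟨z, Finset.mem_biUnion.2 ⟨y, hy, hz⟩, ?_⟩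
      rwa [pow_succ', ← div_div]

/-- In a doubling space, an `r`-separated family of diameter at most `3 r` has at most `D ^ 3`
members. -/
theorem IsDoublingWith.card_le_of_separated {D : ℕ} (hD : IsDoublingWith X D) {ι : Type*}
    (s : Finset ι) (f : ι → X) {r : ℝ} (hr : 0 < r)
    (hsep : ∀ a ∈ s, ∀ b ∈ s, a ≠ b → r ≤ dist (f a) (f b))
    (hclose : ∀ a ∈ s, ∀ b ∈ s, dist (f a) (f b) ≤ 3 * r) : s.card ≤ D ^ 3 := by
  rcases s.eq_empty_or_nonempty with rfl | ⟨a₀, ha₀⟩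
  · simp
  obtain ⟨t, htc, ht⟩ := hD.exists_cover 3 (f a₀) (3 * r) (by positivity)
  have hcov : ∀ a ∈ s, ∃ y ∈ t, dist (f a) y ≤ 3 * r / 2 ^ 3 := fun a ha => by
    simpa using ht (mem_closedBall.2 (hclose a ha a₀ ha₀))
  have : Nonempty X := ⟨f a₀⟩
  choose! g hgt hg using hcov
  refine (Finset.card_le_card_of_injOn g hgt fun a ha b hb hab => ?_).trans htc
  by_contra hne
  have h1 := hg a ha
  have h2 := hg b hb
  have h3 := hsep a ha b hb hne
  have h4 := dist_triangle_right (f a) (f b) (g a)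
  rw [← hab] at h2
  linarith

/-- Closed balls of radius `r` with disjoint interiors have centers at distance at least `r`. -/
theorem le_dist_of_disjoint_interior {x y : X} {r : ℝ} (hr : 0 < r)
    (h : Disjoint (interior (closedBall x r)) (interior (closedBall y r))) : r ≤ dist x y := by
  by_contra! hlt
  exact disjoint_left.1 h (ball_subset_interior_closedBall (mem_ball_self hr))
    (ball_subset_interior_closedBall (mem_ball.2 hlt))

/-- The words of length `K` over an alphabet with `m` letters. -/
def words (m K : ℕ) : Finset (List (Fin m)) :=
  (Finset.univ : Finset (Fin K → Fin m)).map ⟨List.ofFn, List.ofFn_injective⟩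

theorem mem_words {m K : ℕ} {w : List (Fin m)} : w ∈ words m K ↔ w.length = K := by
  constructor
  · intro h
    obtain ⟨f, -, rfl⟩ := Finset.mem_map.1 h
    simp
  · rintro rfl
    exact Finset.mem_map.2 ⟨w.get, Finset.mem_univ _, List.ofFn_get w⟩

theorem card_words (m K : ℕ) : (words m K).card = m ^ K := by
  simp [words]

/-- `Z` assigns to the words of length at most `K` a tree of balls, rooted at `x`, where a word
of length `j` carries a ball of radius `r (n + j)`. -/
structure IsBallTree {m : ℕ} (r : ℕ → ℝ) (n : ℕ) (x : X) (K : ℕ) (Z : List (Fin m) → X) :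
    Prop where
  root : Z [] = x
  nested : ∀ w v : List (Fin m), w.length + v.length ≤ K →
    closedBall (Z (w ++ v)) (r (n + (w.length + v.length))) ⊆ closedBall (Z w) (r (n + w.length))
  disjoint : ∀ w w' : List (Fin m), w.length = w'.length → w.length ≤ K → w ≠ w' →
    Disjoint (interior (closedBall (Z w) (r (n + w.length))))
      (interior (closedBall (Z w') (r (n + w.length))))

/-- The ball tree whose root is `x` and whose subtrees are the `Z j`. -/
def joinTrees {m : ℕ} (x : X) (Z : Fin m → List (Fin m) → X) : List (Fin m) → X
  | [] => x
  | a :: w => Z a w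

theorem IsBallTree.join {m : ℕ} {r : ℕ → ℝ} {n K : ℕ} {x : X} {z : Fin m → X}
    {Z : Fin m → List (Fin m) → X} (hZ : ∀ j, IsBallTree r (n + 1) (z j) K (Z j))
    (hsub : ∀ j, closedBall (z j) (r (n + 1)) ⊆ closedBall x (r n))
    (hdis : Pairwise fun j j' : Fin m => Disjoint (interior (closedBall (z j) (r (n + 1))))
      (interior (closedBall (z j') (r (n + 1))))) :
    IsBallTree r n x (K + 1) (joinTrees x Z) := by
  have hin : ∀ a v, v.length ≤ K →
      closedBall (Z a v) (r (n + (v.length + 1))) ⊆ closedBall (z a) (r (n + 1)) := by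
    intro a v hv
    have := (hZ a).nested [] v (by simpa using hv)
    simpa [(hZ a).root, add_assoc, add_comm 1] using this
  refine ⟨rfl, ?_, ?_⟩
  · rintro (_ | ⟨a, w⟩) v hK
    · rcases v with _ | ⟨a, v⟩
      · simp
      · simpa [joinTrees] using (hin a v (by simpa using hK)).trans (hsub a)
    · have := (hZ a).nested w v (by simp at hK; omega)
      simpa [joinTrees, add_assoc, add_comm, add_left_comm] using this
  · rintro (_ | ⟨a, w⟩) (_ | ⟨b, w'⟩) hl hK hne
    · simp at hne
    · simp at hl
    · simp at hl
    · simp only [List.length_cons, Nat.add_right_cancel_iff, Nat.add_le_add_iff_right] at hl hK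
      by_cases hab : a = b
      · subst hab
        have := (hZ a).disjoint w w' hl hK (by simpa using hne)
        simpa [joinTrees, add_assoc, add_comm, add_left_comm] using this
      · refine (hdis hab).mono (interior_mono ?_) (interior_mono ?_)
        · simpa [joinTrees] using hin a w hK
        · simpa [joinTrees, hl] using hin b w' (hl ▸ hK)

/-- For each large depth `K` there is a ball tree rooted at `x` all of whose level-`K` centers lie
in finitely many of the sets `U i`, chosen independently of `K`. -/
def TreeCovered (m : ℕ) (r : ℕ → ℝ) (U : ℕ → Set X) (n : ℕ) (x : X) : Prop :=
  ∃ (I : Finset ℕ) (k : ℕ), ∀ K ≥ k, ∃ Z : List (Fin m) → X, IsBallTree r n x K Z ∧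
    ∀ w, w.length = K → ∃ i ∈ I, Z w ∈ U i

theorem TreeCovered.join {m : ℕ} {r : ℕ → ℝ} {U : ℕ → Set X} {n : ℕ} {x : X} {z : Fin m → X}
    (hz : ∀ j, TreeCovered m r U (n + 1) (z j))
    (hsub : ∀ j, closedBall (z j) (r (n + 1)) ⊆ closedBall x (r n))
    (hdis : Pairwise fun j j' : Fin m => Disjoint (interior (closedBall (z j) (r (n + 1))))
      (interior (closedBall (z j') (r (n + 1))))) :
    TreeCovered m r U n x := by
  choose I k hk using hz
  refine ⟨Finset.univ.biUnion I, Finset.univ.sup k + 1, fun K hK => ?_⟩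
  obtain ⟨K, rfl⟩ : ∃ K', K = K' + 1 := ⟨K - 1, by omega⟩
  choose Z hZ hU using fun j =>
    hk j K ((Finset.le_sup (Finset.mem_univ j)).trans (by omega))
  refine ⟨joinTrees x Z, IsBallTree.join hZ hsub hdis, ?_⟩
  rintro (_ | ⟨a, w⟩) hw
  · simp at hw
  · obtain ⟨i, hi, hiU⟩ := hU a w (by simpa using hw)
    exact ⟨i, Finset.mem_biUnion.2 ⟨a, Finset.mem_univ a, hi⟩, hiU⟩

/-- The branching hypothesis on the sequence of radii `r`: whenever Player I answers a ball of
radius `r n` by a ball of radius `r' n` inside a fixed set `B`, Player II has `m` replies of radius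
`r (n + 1)` with disjoint interiors. -/
def HasReplies (m : ℕ) (r r' : ℕ → ℝ) (B : Set X) : Prop :=
  ∀ (n : ℕ) (y : X), closedBall y (r' n) ⊆ B → ∃ z : Fin m → X,
    (∀ j, closedBall (z j) (r (n + 1)) ⊆ closedBall y (r' n)) ∧
    Pairwise fun j j' : Fin m => Disjoint (interior (closedBall (z j) (r (n + 1))))
      (interior (closedBall (z j') (r (n + 1))))

theorem HasReplies.exists_isBallTree {m : ℕ} {r r' : ℕ → ℝ} {B : Set X}
    (h : HasReplies m r r' B) (hr : ∀ n, r' n ≤ r n) (K : ℕ) :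
    ∀ (n : ℕ) (x : X), closedBall x (r n) ⊆ B →
      ∃ Z : List (Fin m) → X, IsBallTree r n x K Z := by
  induction K with
  | zero =>
    refine fun n x _ => ⟨fun _ => x, rfl, fun w v hwv => ?_, fun w w' hl hw hne => ?_⟩
    · obtain ⟨h1, h2⟩ : w.length = 0 ∧ v.length = 0 := by omega
      simp [h1, h2]
    · rw [Nat.le_zero] at hw
      rw [hw] at hl
      exact absurd ((List.length_eq_zero_iff.1 hw).trans (List.length_eq_zero_iff.1 hl.symm).symm)
        hne
  | succ K ih =>
    intro n x hx
    have hx' : closedBall x (r' n) ⊆ closedBall x (r n) := closedBall_subset_closedBall (hr n)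
    obtain ⟨z, hz, hdis⟩ := h n x (hx'.trans hx)
    choose Z hZ using fun j => ih (n + 1) (z j) (((hz j).trans hx').trans hx)
    exact ⟨_, IsBallTree.join hZ (fun j => (hz j).trans hx') hdis⟩

theorem HasReplies.treeCovered_of_subset {m : ℕ} {r r' : ℕ → ℝ} {B : Set X}
    (h : HasReplies m r r' B) (hr : ∀ n, r' n ≤ r n) (hr0 : ∀ n, 0 ≤ r n) {U : ℕ → Set X}
    {n i : ℕ} {x : X} (hx : closedBall x (r n) ⊆ B) (hU : closedBall x (r n) ⊆ U i) :
    TreeCovered m r U n x := by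
  refine ⟨{i}, 0, fun K _ => ?_⟩
  obtain ⟨Z, hZ⟩ := h.exists_isBallTree hr K n x hx
  refine ⟨Z, hZ, fun w hw => ⟨i, Finset.mem_singleton_self i, hU ?_⟩⟩
  have := hZ.nested [] w (by simp [hw])
  simp only [List.nil_append, hZ.root, List.length_nil, add_zero] at this
  exact this (mem_closedBall_self (hr0 _))

/-- A set of diameter at most `r j` contains at most `D ^ 3 * m ^ (K - j)` of the level-`K`
centers of a ball tree. -/
theorem IsBallTree.card_filter_mem_le {D : ℕ} (hD : IsDoublingWith X D) {m : ℕ} {r : ℕ → ℝ}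
    (hr : ∀ n, 0 < r n) {x : X} {K : ℕ} {Z : List (Fin m) → X} (hZ : IsBallTree r 0 x K Z)
    {U : Set X} {j : ℕ} (hj : j ≤ K) (hU : ∀ p ∈ U, ∀ q ∈ U, dist p q ≤ r j)
    [DecidablePred fun w => Z w ∈ U] :
    ((words m K).filter fun w => Z w ∈ U).card ≤ D ^ 3 * m ^ (K - j) := by
  classical
  set P := (words m j).filter fun u => ∃ p ∈ U, dist p (Z u) ≤ r j with hP
  have hPcard : P.card ≤ D ^ 3 := by
    refine hD.card_le_of_separated P Z (hr j) ?_ ?_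
    · intro a ha b hb hab
      have hla := mem_words.1 (Finset.mem_filter.1 ha).1
      have hlb := mem_words.1 (Finset.mem_filter.1 hb).1
      have := hZ.disjoint a b (hla.trans hlb.symm) (hla.le.trans hj) hab
      rw [zero_add, hla] at this
      exact le_dist_of_disjoint_interior (hr j) this
    · intro a ha b hb
      obtain ⟨p, hp, hpa⟩ := (Finset.mem_filter.1 ha).2
      obtain ⟨q, hq, hqb⟩ := (Finset.mem_filter.1 hb).2
      have h1 := hU p hp q hq
      have h2 := dist_triangle4 (Z a) p q (Z b)
      rw [dist_comm (Z a) p] at h2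
      linarith
  calc ((words m K).filter fun w => Z w ∈ U).card
      ≤ (P ×ˢ words m (K - j)).card := by
        refine Finset.card_le_card_of_injOn (fun w => (w.take j, w.drop j)) ?_ ?_
        · intro w hw
          obtain ⟨hw, hwU⟩ := Finset.mem_filter.1 hw
          rw [mem_words] at hw
          have hlt : (w.take j).length = j := by simp [hw, hj]
          have hld : (w.drop j).length = K - j := by simp [hw]
          refine Finset.mem_product.2 ⟨Finset.mem_filter.2 ⟨mem_words.2 hlt, Z w, hwU, ?_⟩,
            mem_words.2 hld⟩
          have := hZ.nested (w.take j) (w.drop j) (by omega)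
          rw [List.take_append_drop, hlt, zero_add, zero_add] at this
          exact this (mem_closedBall_self (hr _).le)
        · intro w _ w' _ h
          obtain ⟨h1, h2⟩ := Prod.mk.inj h
          rw [← List.take_append_drop j w, h1, h2, List.take_append_drop]
    _ ≤ D ^ 3 * m ^ (K - j) := by
        rw [Finset.card_product, card_words]
        exact Nat.mul_le_mul_right _ hPcard

/-- Sets whose total weight is small do not cover a deep level of a ball tree. -/
theorem not_treeCovered {D : ℕ} (hD : IsDoublingWith X D) {m : ℕ} (hm : 1 ≤ m) {r : ℕ → ℝ}
    (hr : ∀ n, 0 < r n) {x : X} {U : ℕ → Set X} {j : ℕ → ℕ}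
    (hU : ∀ i, ∀ p ∈ U i, ∀ q ∈ U i, dist p q ≤ r (j i))
    (hsum : ∀ I : Finset ℕ, (D : ℝ) ^ 3 * ∑ i ∈ I, ((m : ℝ)⁻¹) ^ j i < 1) :
    ¬ TreeCovered m r U 0 x := by
  classical
  rintro ⟨I, k, hk⟩
  set K := max k (I.sup j) with hK
  obtain ⟨Z, hZ, hZU⟩ := hk K (le_max_left _ _)
  have hjK : ∀ i ∈ I, j i ≤ K := fun i hi => (Finset.le_sup hi).trans (le_max_right _ _)
  have hcard : m ^ K ≤ ∑ i ∈ I, D ^ 3 * m ^ (K - j i) := by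
    calc m ^ K = (words m K).card := (card_words m K).symm
      _ ≤ (I.biUnion fun i => (words m K).filter fun w => Z w ∈ U i).card := by
        refine Finset.card_le_card fun w hw => ?_
        obtain ⟨i, hi, hiU⟩ := hZU w (mem_words.1 hw)
        exact Finset.mem_biUnion.2 ⟨i, hi, Finset.mem_filter.2 ⟨hw, hiU⟩⟩
      _ ≤ ∑ i ∈ I, ((words m K).filter fun w => Z w ∈ U i).card := Finset.card_biUnion_le
      _ ≤ _ := Finset.sum_le_sum fun i hi => hZ.card_filter_mem_le hD hr (hjK i hi) (hU i)
  have hm0 : (0 : ℝ) < m := by exact_mod_cast hm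
  have hreal : (m : ℝ) ^ K ≤ (m : ℝ) ^ K * ((D : ℝ) ^ 3 * ∑ i ∈ I, ((m : ℝ)⁻¹) ^ j i) := by
    calc (m : ℝ) ^ K ≤ ∑ i ∈ I, (D : ℝ) ^ 3 * (m : ℝ) ^ (K - j i) := by exact_mod_cast hcard
      _ = _ := by
        rw [Finset.mul_sum, Finset.mul_sum]
        refine Finset.sum_congr rfl fun i hi => ?_
        rw [pow_sub₀ _ hm0.ne' (hjK i hi), inv_pow]
        ring
  nlinarith [hsum I, pow_pos hm0 K]

/-- A null set for the `t`-dimensional Hausdorff measure is covered by open sets `U i` of diameter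
at most `q ^ j i * ρ` such that the weights `c ^ j i` have small total sum. -/
theorem exists_open_cover_of_hausdorffMeasure_eq_zero [MeasurableSpace X] [BorelSpace X]
    {S : Set X} {t q ρ c ε : ℝ} (ht : 0 < t) (hq0 : 0 < q) (hq1 : q < 1) (hρ : 0 < ρ)
    (hc0 : 0 ≤ c) (hc : c ≤ q ^ t) (hε : 0 < ε)
    (hS : MeasureTheory.Measure.hausdorffMeasure t S = 0) :
    ∃ (U : ℕ → Set X) (j : ℕ → ℕ), (∀ i, IsOpen (U i)) ∧ S ⊆ ⋃ i, U i ∧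
      (∀ i, ∀ x ∈ U i, ∀ y ∈ U i, dist x y ≤ q ^ j i * ρ) ∧
      ∀ I : Finset ℕ, ∑ i ∈ I, c ^ j i < ε := by
  set M : ℝ := (3 / (q * ρ)) ^ t with hM
  have hM0 : 0 < M := by positivity
  set η : ℝ≥0∞ := ENNReal.ofReal (ε / M / 2) with hη
  have hη0 : 0 < η := ENNReal.ofReal_pos.2 (by positivity)
  obtain ⟨T, hST, hTd, hTsum⟩ : ∃ T : ℕ → Set X, S ⊆ ⋃ n, T n ∧
      (∀ n, ediam (T n) ≤ ENNReal.ofReal (ρ / 4)) ∧ ∑' n, ediam (T n) ^ t < η := by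
    rw [MeasureTheory.Measure.hausdorffMeasure_apply] at hS
    have h1 := (iSup₂_eq_bot.1 hS) (ENNReal.ofReal (ρ / 4)) (ENNReal.ofReal_pos.2 (by positivity))
    have h2 := h1.trans_lt hη0
    simp only [iInf_lt_iff] at h2
    obtain ⟨T, hT, hTd, hsum⟩ := h2
    refine ⟨T, hT, hTd, lt_of_le_of_lt (ENNReal.tsum_le_tsum fun n => ?_) hsum⟩
    rcases (T n).eq_empty_or_nonempty with h | h
    · simp [h, ht]
    · exact le_iSup_of_le h le_rfl
  obtain ⟨δ, hδ0, hδ⟩ := ENNReal.exists_pos_sum_of_countable hη0.ne' ℕ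
  have hd : ∀ n, ∃ d : ℝ, 0 < d ∧ d < ρ / 3 ∧ ediam (T n) < ENNReal.ofReal d ∧
      ENNReal.ofReal (d ^ t) ≤ ediam (T n) ^ t + δ n := by
    intro n
    have hfin : ediam (T n) ≠ ⊤ := ((hTd n).trans_lt ENNReal.ofReal_lt_top).ne
    set a := (ediam (T n)).toReal with ha
    have ha0 : 0 ≤ a := ENNReal.toReal_nonneg
    have haT : ediam (T n) = ENNReal.ofReal a := (ENNReal.ofReal_toReal hfin).symm
    have hcont : Filter.Tendsto (fun d : ℝ => d ^ t) (nhdsWithin a (Ioi a)) (nhds (a ^ t)) :=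
      ((Real.continuous_rpow_const ht.le).tendsto a).mono_left nhdsWithin_le_nhds
    have haρ : a < ρ / 3 := by
      have := hTd n
      rw [haT, ENNReal.ofReal_le_ofReal_iff (by positivity)] at this
      linarith
    have hev := (hcont.eventually (gt_mem_nhds (lt_add_of_pos_right (a ^ t)
      (NNReal.coe_pos.2 (hδ0 n))))).and (Ioo_mem_nhdsGT haρ)
    obtain ⟨d, hd1, hd2⟩ := hev.exists
    have hd0 : 0 < d := ha0.trans_lt hd2.1
    refine ⟨d, hd0, hd2.2, ?_, ?_⟩
    · rw [haT]
      exact (ENNReal.ofReal_lt_ofReal_iff hd0).2 hd2.1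
    · rw [haT, ENNReal.ofReal_rpow_of_nonneg ha0 ht.le, ← ENNReal.ofReal_coe_nnreal,
        ← ENNReal.ofReal_add (by positivity) (by positivity)]
      exact ENNReal.ofReal_le_ofReal hd1.le
  choose d hd0 hdρ hdT hdt using hd
  have hj : ∀ n, ∃ j : ℕ, q ^ (j + 1) < 3 * d n / ρ ∧ 3 * d n / ρ ≤ q ^ j := fun n =>
    exists_nat_pow_near_of_lt_one (by have := hd0 n; positivity)
      ((div_le_one hρ).2 (by linarith [hdρ n])) hq0 hq1
  choose j hj1 hj2 using hj
  refine ⟨fun n => thickening (d n) (T n), j, fun n => isOpen_thickening, ?_, ?_, ?_⟩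
  · exact hST.trans (iUnion_mono fun n => self_subset_thickening (hd0 n) _)
  · intro n x hx y hy
    obtain ⟨x', hx', hxx'⟩ := mem_thickening_iff.1 hx
    obtain ⟨y', hy', hyy'⟩ := mem_thickening_iff.1 hy
    have h1 : dist x' y' < d n := by
      have := (edist_le_ediam_of_mem hx' hy').trans_lt (hdT n)
      rwa [edist_dist, ENNReal.ofReal_lt_ofReal_iff (hd0 n)] at this
    have h2 := dist_triangle4 x x' y' y
    rw [dist_comm y' y] at h2
    have h3 := (div_le_iff₀ hρ).1 (hj2 n)
    linarith
  · intro I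
    have hterm : ∀ n, c ^ j n ≤ M * d n ^ t := by
      intro n
      have h1 : q ^ j n ≤ 3 / (q * ρ) * d n := by
        have h2 := (hj1 n).le
        rw [pow_succ, ← le_div_iff₀ hq0] at h2
        refine h2.trans_eq ?_
        field_simp
      calc c ^ j n ≤ (q ^ t) ^ j n := pow_le_pow_left₀ hc0 hc _
        _ = (q ^ j n) ^ t := by
          rw [← Real.rpow_natCast, ← Real.rpow_natCast, ← Real.rpow_mul hq0.le,
            ← Real.rpow_mul hq0.le, mul_comm]
        _ ≤ (3 / (q * ρ) * d n) ^ t := Real.rpow_le_rpow (by positivity) h1 ht.le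
        _ = M * d n ^ t := Real.mul_rpow (by positivity) (hd0 n).le
    have hsum : ∑ n ∈ I, d n ^ t < ε / M := by
      rw [← ENNReal.ofReal_lt_ofReal_iff (by positivity),
        ENNReal.ofReal_sum_of_nonneg fun n _ => Real.rpow_nonneg (hd0 n).le t]
      calc ∑ n ∈ I, ENNReal.ofReal (d n ^ t)
          ≤ ∑ n ∈ I, (ediam (T n) ^ t + δ n) := Finset.sum_le_sum fun n _ => hdt n
        _ ≤ ∑' n, (ediam (T n) ^ t + δ n) := ENNReal.sum_le_tsum I
        _ = ∑' n, ediam (T n) ^ t + ∑' n, (δ n : ℝ≥0∞) := ENNReal.tsum_add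
        _ < η + η := ENNReal.add_lt_add hTsum hδ
        _ = ENNReal.ofReal (ε / M) := by
          rw [hη, ← ENNReal.ofReal_add (by positivity) (by positivity), add_halves]
    calc ∑ n ∈ I, c ^ j n ≤ ∑ n ∈ I, M * d n ^ t := Finset.sum_le_sum fun n _ => hterm n
      _ = M * ∑ n ∈ I, d n ^ t := (Finset.mul_sum _ _ _).symm
      _ < M * (ε / M) := mul_lt_mul_of_pos_left hsum hM0
      _ = ε := mul_div_cancel₀ _ hM0.ne'

theorem rho_even (α β ρ : ℝ) (k : ℕ) : rho α β ρ (2 * k) = α * ((α * β) ^ k * ρ) := by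
  have h1 : 2 * k / 2 = k := by omega
  have h2 : (2 * k + 1) / 2 = k := by omega
  rw [rho, h1, h2, mul_pow]
  ring

theorem rho_odd (α β ρ : ℝ) (k : ℕ) : rho α β ρ (2 * k + 1) = (α * β) ^ (k + 1) * ρ := by
  have h1 : (2 * k + 1) / 2 = k := by omega
  have h2 : (2 * k + 1 + 1) / 2 = k + 1 := by omega
  rw [rho, h1, h2, mul_pow]

theorem AdmAt.subset_succ {α β ρ : ℝ} {c : X} {y : ℕ → X} {k : ℕ}
    (h : AdmAt α β c ρ y (k + 1)) :
    closedBall (y (k + 1)) (rho α β ρ (k + 1)) ⊆ closedBall (y k) (rho α β ρ k) := by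
  simpa [AdmAt] using h

theorem AdmUpTo.subset_initial {α β ρ : ℝ} {c : X} {y : ℕ → X} {k : ℕ}
    (h : AdmUpTo α β c ρ y (k + 1)) : closedBall (y k) (rho α β ρ k) ⊆ closedBall c ρ := by
  induction k with
  | zero => simpa [AdmAt] using h 0 zero_lt_one
  | succ k ih =>
    exact (h (k + 1) (Nat.lt_succ_self _)).subset_succ.trans
      (ih fun i hi => h i (hi.trans (Nat.lt_succ_self _)))

/-- Closed balls that form a nested sequence in a complete space have a common point when the
radii tend to zero. -/
theorem exists_mem_iInter_closedBall [CompleteSpace X] {y : ℕ → X} {s : ℕ → ℝ}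
    (hs0 : ∀ n, 0 ≤ s n) (hs : Filter.Tendsto s Filter.atTop (nhds 0))
    (hy : ∀ n, closedBall (y (n + 1)) (s (n + 1)) ⊆ closedBall (y n) (s n)) :
    ∃ p, ∀ n, p ∈ closedBall (y n) (s n) := by
  have hanti : Antitone fun n => closedBall (y n) (s n) := antitone_nat_of_succ_le hy
  have hmem : ∀ n k, n ≤ k → y k ∈ closedBall (y n) (s n) := fun n k hnk =>
    hanti hnk (mem_closedBall_self (hs0 k))
  have hc : CauchySeq y := cauchySeq_of_le_tendsto_0' s
    (fun n k hnk => by rw [dist_comm]; exact hmem n k hnk) hs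
  obtain ⟨p, hp⟩ := cauchySeq_tendsto_of_complete hc
  exact ⟨p, fun n => isClosed_closedBall.mem_of_tendsto hp
    (Filter.eventually_atTop.2 ⟨n, fun k hk => hmem n k hk⟩)⟩

theorem tendsto_rho {α β : ℝ} (hα : α ∈ Ioo (0 : ℝ) 1) (hβ : β ∈ Ioo (0 : ℝ) 1) (ρ : ℝ) :
    Filter.Tendsto (rho α β ρ) Filter.atTop (nhds 0) := by
  have h2 : Filter.Tendsto (fun n : ℕ => n / 2) Filter.atTop Filter.atTop :=
    Nat.tendsto_div_const_atTop two_ne_zero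
  have h1 := (tendsto_pow_atTop_nhds_zero_of_lt_one hα.1.le hα.2).comp
    ((Filter.tendsto_add_atTop_nat 1).comp h2)
  have h3 := (tendsto_pow_atTop_nhds_zero_of_lt_one hβ.1.le hβ.2).comp
    (h2.comp (Filter.tendsto_add_atTop_nat 1))
  simpa [funext (rho.eq_1 α β ρ), Function.comp_def] using (h1.mul h3).mul_const ρ

/-- Player II can reply so as never to enter a position covered by a ball tree. -/
theorem HasReplies.exists_reply {m : ℕ} {r r' : ℕ → ℝ} {B : Set X} (h : HasReplies m r r' B)
    (hm : 1 ≤ m) (U : ℕ → Set X) (n : ℕ) (p : X) :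
    ∃ z : X, closedBall p (r' n) ⊆ B → closedBall z (r (n + 1)) ⊆ closedBall p (r' n) ∧
      ∀ x, closedBall p (r' n) ⊆ closedBall x (r n) → ¬ TreeCovered m r U n x →
        ¬ TreeCovered m r U (n + 1) z := by
  by_cases hp : closedBall p (r' n) ⊆ B
  · obtain ⟨z, hz, hdis⟩ := h n p hp
    by_cases hall : ∀ j, TreeCovered m r U (n + 1) (z j)
    · exact ⟨z ⟨0, hm⟩, fun _ => ⟨hz _, fun x hx hnx =>
        absurd (TreeCovered.join hall (fun j => (hz j).trans hx) hdis) hnx⟩⟩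
    · obtain ⟨j, hj⟩ := not_forall.1 hall
      exact ⟨z j, fun _ => ⟨hz j, fun _ _ _ => hj⟩⟩
  · exact ⟨p, fun h => absurd h hp⟩

theorem getLast?_getD_ofFn {A : Type*} (y : ℕ → A) (k : ℕ) (a : A) :
    (List.ofFn fun i : Fin (k + 1) => y i).getLast?.getD a = y k := by
  simp [List.getLast?_eq_getElem?, -List.ofFn_succ]

/-- Schmidt's theorem for complete doubling spaces: if every small enough ball inside some
fixed ball `B̄(x̃,ρ̃)` contains `m` balls shrunk by `β` with pairwise disjoint interiors, and
`dim_H S < log m / log (1/(αβ))`, then Player II has a winning strategy in the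
`(α,β)`-Schmidt game with target set `S`. -/
theorem playerII_wins_schmidt_game [CompleteSpace X] (D : ℕ) (hD : IsDoublingWith X D)
    (α β : ℝ) (hα : α ∈ Set.Ioo (0 : ℝ) 1) (hβ : β ∈ Set.Ioo (0 : ℝ) 1) (S : Set X)
    (x₀ : X) (ρ₀ : ℝ) (hρ₀ : 0 < ρ₀) (m : ℕ) (hm : 1 ≤ m)
    (hpack : ∀ ρ ∈ Set.Ioo (0 : ℝ) ρ₀, ∀ y : X, closedBall y ρ ⊆ closedBall x₀ ρ₀ →
      ∃ z : Fin m → X, (∀ j, closedBall (z j) (β * ρ) ⊆ closedBall y ρ) ∧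
        Pairwise fun j j' : Fin m =>
          Disjoint (interior (closedBall (z j) (β * ρ))) (interior (closedBall (z j') (β * ρ))))
    (hS : dimH S < ENNReal.ofReal (Real.log m / Real.log (1 / (α * β)))) :
    ∃ (c : X) (ρinit : ℝ) (σ : List X → X), 0 < ρinit ∧
      (∀ (y : ℕ → X) (n : ℕ), Odd n → AdmUpTo α β c ρinit y n →
        closedBall (σ (List.ofFn fun i : Fin n => y i)) (rho α β ρinit n) ⊆
          closedBall (y (n - 1)) (rho α β ρinit (n - 1))) ∧
      ∀ y : ℕ → X, (∀ k : ℕ, AdmAt α β c ρinit y k) →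
        (∀ n : ℕ, Odd n → y n = σ (List.ofFn fun i : Fin n => y i)) →
        ¬ (⋂ n : ℕ, closedBall (y n) (rho α β ρinit n)) ⊆ S := by
  have hq0 : 0 < α * β := mul_pos hα.1 hβ.1
  have hq1 : α * β < 1 := mul_lt_one_of_nonneg_of_lt_one_left hα.1.le hα.2 hβ.2.le
  set r : ℕ → ℝ := fun n => (α * β) ^ n * ρ₀ with hr
  have hr0 : ∀ n, 0 < r n := fun n => by positivity
  have hr' : ∀ n, α * r n < r n := fun n => mul_lt_of_lt_one_left (hr0 n) hα.2
  have hrle : ∀ n, r n ≤ ρ₀ := fun n =>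
    mul_le_of_le_one_left hρ₀.le (pow_le_one₀ hq0.le hq1.le)
  have hreplies : HasReplies m r (fun n => α * r n) (closedBall x₀ ρ₀) := by
    intro n y hy
    have hβr : β * (α * r n) = r (n + 1) := by
      simp only [hr]
      ring
    rw [← hβr]
    exact hpack (α * r n) ⟨mul_pos hα.1 (hr0 n), (hr' n).trans_le (hrle n)⟩ y hy
  have hm0 : (0 : ℝ) < m := by exact_mod_cast hm
  obtain ⟨U, j, hUo, hSU, hUd, hsum⟩ : ∃ (U : ℕ → Set X) (j : ℕ → ℕ), (∀ i, IsOpen (U i)) ∧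
      S ⊆ ⋃ i, U i ∧ (∀ i, ∀ x ∈ U i, ∀ y ∈ U i, dist x y ≤ r (j i)) ∧
      ∀ I : Finset ℕ, ∑ i ∈ I, ((m : ℝ)⁻¹) ^ j i < 1 / ((D : ℝ) ^ 3 + 1) := by
    let _ : MeasurableSpace X := borel X
    have : BorelSpace X := ⟨rfl⟩
    obtain ⟨t, hSt, htm⟩ := ENNReal.lt_iff_exists_nnreal_btwn.1 hS
    have ht0 : (0 : ℝ) < t := NNReal.coe_pos.2 (ENNReal.coe_pos.1 (zero_le.trans_lt hSt))
    have htlog : (t : ℝ) < Real.log m / Real.log (1 / (α * β)) := by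
      rw [← ENNReal.ofReal_coe_nnreal] at htm
      exact (ENNReal.ofReal_lt_ofReal_iff_of_nonneg t.2).1 htm
    have hlog : 0 < Real.log (1 / (α * β)) := Real.log_pos (one_lt_one_div hq0 hq1)
    have hmq : (m : ℝ)⁻¹ ≤ (α * β) ^ (t : ℝ) := by
      rw [lt_div_iff₀ hlog, one_div, Real.log_inv] at htlog
      rw [← Real.log_le_log_iff (inv_pos.2 hm0) (Real.rpow_pos_of_pos hq0 _), Real.log_inv,
        Real.log_rpow hq0]
      linarith
    exact exists_open_cover_of_hausdorffMeasure_eq_zero ht0 hq0 hq1 hρ₀ (by positivity) hmq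
      (by positivity) (hausdorffMeasure_of_dimH_lt hSt)
  have hroot : ¬ TreeCovered m r U 0 x₀ := by
    refine not_treeCovered hD hm hr0 hUd fun I => ?_
    have h1 := (lt_div_iff₀ (by positivity)).1 (hsum I)
    have h2 : 0 ≤ ∑ i ∈ I, ((m : ℝ)⁻¹) ^ j i := Finset.sum_nonneg fun i _ => by positivity
    linarith
  choose reply hreply using hreplies.exists_reply hm U
  have hσ : ∀ (y : ℕ → X) (k : ℕ),
      reply ((List.ofFn fun i : Fin (2 * k + 1) => y i).length / 2)
        ((List.ofFn fun i : Fin (2 * k + 1) => y i).getLast?.getD x₀) = reply k (y (2 * k)) := by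
    intro y k
    rw [getLast?_getD_ofFn, List.length_ofFn, show (2 * k + 1) / 2 = k by omega]
  refine ⟨x₀, ρ₀, fun l => reply (l.length / 2) (l.getLast?.getD x₀), hρ₀, ?_, ?_⟩
  · rintro y _ ⟨k, rfl⟩ hadm
    have hB := hadm.subset_initial
    rw [rho_even] at hB
    simp only [hσ, Nat.add_sub_cancel, rho_odd, rho_even]
    exact (hreply k _ hB).1
  · intro y hadm hy hsub
    have hinside : ∀ k, closedBall (y k) (rho α β ρ₀ k) ⊆ closedBall x₀ ρ₀ := fun k =>
      AdmUpTo.subset_initial fun i _ => hadm i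
    have havoid : ∀ k, ¬ TreeCovered m r U (k + 1) (y (2 * k + 1)) := by
      have hstep : ∀ k x, closedBall (y (2 * k)) (α * r k) ⊆ closedBall x (r k) →
          ¬ TreeCovered m r U k x → ¬ TreeCovered m r U (k + 1) (y (2 * k + 1)) := by
        intro k x hx hnx
        have hB := hinside (2 * k)
        rw [rho_even] at hB
        rw [hy (2 * k + 1) ⟨k, rfl⟩]
        simp only [hσ]
        exact (hreply k _ hB).2 x hx hnx
      intro k
      induction k with
      | zero =>
        refine hstep 0 x₀ ?_ hroot
        have := hadm 0
        simpa [AdmAt, rho, hr] using this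
      | succ k ih =>
        refine hstep (k + 1) _ ?_ ih
        have := (hadm (2 * k + 1 + 1)).subset_succ
        rwa [show 2 * k + 1 + 1 = 2 * (k + 1) by ring, rho_even, rho_odd] at this
    have hρt := tendsto_rho hα hβ ρ₀
    have hρ0 : ∀ n, 0 ≤ rho α β ρ₀ n := fun n => by
      have := hα.1
      have := hβ.1
      unfold rho
      positivity
    obtain ⟨p, hp⟩ := exists_mem_iInter_closedBall hρ0 hρt fun n => (hadm (n + 1)).subset_succ
    obtain ⟨i, hi⟩ := mem_iUnion.1 (hSU (hsub (mem_iInter.2 hp)))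
    obtain ⟨ε, hε, hεU⟩ := Metric.isOpen_iff.1 (hUo i) p hi
    obtain ⟨N, hN⟩ := Filter.eventually_atTop.1 (hρt.eventually (gt_mem_nhds (half_pos hε)))
    have hball : closedBall (y (2 * N + 1)) (rho α β ρ₀ (2 * N + 1)) ⊆ U i := by
      refine Subset.trans (fun z hz => ?_) hεU
      have h1 := hN (2 * N + 1) (by omega)
      have h2 := mem_closedBall.1 (hp (2 * N + 1))
      have h3 := dist_triangle_right z p (y (2 * N + 1))
      rw [mem_closedBall] at hz
      rw [mem_ball]
      linarith
    have hB := hinside (2 * N + 1)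
    rw [rho_odd] at hball hB
    exact havoid N (hreplies.treeCovered_of_subset (fun n => (hr' n).le) (fun n => (hr0 n).le)
      hB hball)
end

section
/- Fix integers m ≥ 2 and d ≥ 1 and let S ⊆ ℝ^d with dim_H(S) < d/2, the Hausdorff dimension taken with respect to the Euclidean metric. Then Player II has a winning strategy in the m-adic cubes intersection game with target set S. -/
open Set
open scoped ENNReal

/-- The half-open `m`-adic cube `Q(ℓ,b) = m^(-ℓ)·([0,1)^d + b)` of level `ℓ`. -/
def madicCube (m : ℕ) (d : ℕ) (ℓ : ℤ) (b : Fin d → ℤ) : Set (EuclideanSpace ℝ (Fin d)) :=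
  {x : EuclideanSpace ℝ (Fin d) |
    ∀ j : Fin d, x j ∈ Set.Ico ((m : ℝ) ^ (-ℓ) * b j) ((m : ℝ) ^ (-ℓ) * (b j + 1))}

/-- The closed `m`-adic cube `Q̄(ℓ,b) = m^(-ℓ)·([0,1]^d + b)`. -/
def madicClosedCube (m : ℕ) (d : ℕ) (ℓ : ℤ) (b : Fin d → ℤ) : Set (EuclideanSpace ℝ (Fin d)) :=
  {x : EuclideanSpace ℝ (Fin d) |
    ∀ j : Fin d, x j ∈ Set.Icc ((m : ℝ) ^ (-ℓ) * b j) ((m : ℝ) ^ (-ℓ) * (b j + 1))}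

/-- The cube chosen at stage `k` (of level `L + k + 1`) is contained in the previously
chosen cube, where `(L, binit)` is Player II's initial choice. -/
def CubeAdmAt (m d : ℕ) (L : ℤ) (binit : Fin d → ℤ) (b : ℕ → Fin d → ℤ) (k : ℕ) : Prop :=
  madicCube m d (L + k + 1) (b k) ⊆
    if k = 0 then madicCube m d L binit else madicCube m d (L + k) (b (k - 1))

/-- The play `b` is admissible before stage `n`. -/
def CubeAdmUpTo (m d : ℕ) (L : ℤ) (binit : Fin d → ℤ) (b : ℕ → Fin d → ℤ) (n : ℕ) : Prop :=
  ∀ k < n, CubeAdmAt m d L binit b k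

open MeasureTheory

section

variable {m d : ℕ}

theorem zpow_neg_eq_mul_zpow_neg_add_one (hm : 0 < m) (ℓ : ℤ) :
    (m : ℝ) ^ (-ℓ) = (m : ℝ) ^ (-(ℓ + 1)) * m := by
  have h : (m : ℝ) ≠ 0 := by positivity
  rw [← zpow_add_one₀ h]
  congr 1
  ring

theorem madicCube_succ_subset_iff (hm : 0 < m) {ℓ : ℤ} {b b' : Fin d → ℤ} :
    madicCube m d (ℓ + 1) b' ⊆ madicCube m d ℓ b ↔
      ∀ j, m * b j ≤ b' j ∧ b' j + 1 ≤ m * (b j + 1) := by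
  have hm' : (0 : ℝ) < m := by exact_mod_cast hm
  have hq : (0 : ℝ) < (m : ℝ) ^ (-(ℓ + 1)) := by positivity
  have hstep := zpow_neg_eq_mul_zpow_neg_add_one hm ℓ
  simp only [madicCube, hstep]
  generalize (m : ℝ) ^ (-(ℓ + 1)) = q at hq
  constructor
  · intro h j
    have hmem : WithLp.toLp 2 (fun j => q * (b' j : ℝ)) ∈ {x : EuclideanSpace ℝ (Fin d) |
        ∀ j : Fin d, x j ∈ Set.Ico (q * b' j) (q * (b' j + 1))} := by
      intro i
      simp only [mem_Ico, le_refl, true_and]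
      nlinarith
    obtain ⟨h₁, h₂⟩ := h hmem j
    simp only [mul_assoc] at h₁ h₂
    have h₁ := le_of_mul_le_mul_left h₁ hq
    have h₂ := lt_of_mul_lt_mul_left h₂ hq.le
    exact ⟨by exact_mod_cast h₁, by exact_mod_cast h₂⟩
  · intro h x hx j
    obtain ⟨h₁, h₂⟩ := h j
    obtain ⟨hx₁, hx₂⟩ := hx j
    have h₁ : (m : ℝ) * b j ≤ b' j := by exact_mod_cast h₁
    have h₂ : (b' j : ℝ) + 1 ≤ m * (b j + 1) := by exact_mod_cast h₂
    rw [mul_assoc, mul_assoc]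
    exact ⟨(mul_le_mul_of_nonneg_left h₁ hq.le).trans hx₁,
      hx₂.trans_le (mul_le_mul_of_nonneg_left h₂ hq.le)⟩

theorem disjoint_madicCube (hm : 0 < m) {ℓ : ℤ} {b b' : Fin d → ℤ} (h : b ≠ b') :
    Disjoint (madicCube m d ℓ b) (madicCube m d ℓ b') := by
  have hm' : (0 : ℝ) < m := by exact_mod_cast hm
  have hq : (0 : ℝ) < (m : ℝ) ^ (-ℓ) := by positivity
  rw [Set.disjoint_left]
  intro x hx hx'
  refine h (funext fun j => ?_)
  have h₁ := lt_of_mul_lt_mul_left ((hx j).1.trans_lt (hx' j).2) hq.le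
  have h₂ := lt_of_mul_lt_mul_left ((hx' j).1.trans_lt (hx j).2) hq.le
  norm_cast at h₁ h₂
  omega

theorem madicCube_eq_preimage (ℓ : ℤ) (b : Fin d → ℤ) :
    madicCube m d ℓ b = (WithLp.ofLp : EuclideanSpace ℝ (Fin d) → Fin d → ℝ) ⁻¹'
      Set.univ.pi fun j =>
        Set.Ico ((m : ℝ) ^ (-ℓ) * b j) ((m : ℝ) ^ (-ℓ) * (b j + 1)) := by
  ext x
  simp [madicCube]

theorem measurableSet_madicCube (ℓ : ℤ) (b : Fin d → ℤ) :
    MeasurableSet (madicCube m d ℓ b) := by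
  rw [madicCube_eq_preimage]
  exact (PiLp.volume_preserving_ofLp (Fin d)).measurable
    (MeasurableSet.univ_pi fun _ => measurableSet_Ico)

theorem volume_madicCube (ℓ : ℤ) (b : Fin d → ℤ) :
    volume (madicCube m d ℓ b) = ENNReal.ofReal ((m : ℝ) ^ (-ℓ)) ^ d := by
  rw [madicCube_eq_preimage,
    (PiLp.volume_preserving_ofLp (Fin d)).measure_preimage
      (MeasurableSet.univ_pi fun _ => measurableSet_Ico).nullMeasurableSet,
    Real.volume_pi_Ico]
  simp [mul_add]

/-- Some child of an `m`-adic cube carries at most the average mass of the children. -/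
theorem exists_child_measure_le (hm : 0 < m) (μ : Measure (EuclideanSpace ℝ (Fin d)))
    (ℓ : ℤ) (b : Fin d → ℤ) :
    ∃ b', madicCube m d (ℓ + 1) b' ⊆ madicCube m d ℓ b ∧
      (m : ℝ≥0∞) ^ d * μ (madicCube m d (ℓ + 1) b') ≤ μ (madicCube m d ℓ b) := by
  let child : (Fin d → Fin m) → Fin d → ℤ := fun t j => m * b j + (t j : ℕ)
  have hchild : ∀ t, madicCube m d (ℓ + 1) (child t) ⊆ madicCube m d ℓ b := by
    intro t
    refine (madicCube_succ_subset_iff hm).2 fun j => ?_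
    have := (t j).isLt
    simp only [child]
    constructor
    · omega
    · rw [mul_add]
      omega
  have hinj : Function.Injective child := by
    intro t u h
    funext j
    have := congrFun h j
    simp only [child] at this
    omega
  have : Nonempty (Fin m) := ⟨⟨0, hm⟩⟩
  obtain ⟨t, -, ht⟩ := Finset.exists_min_image (Finset.univ : Finset (Fin d → Fin m))
    (fun t => μ (madicCube m d (ℓ + 1) (child t))) Finset.univ_nonempty
  refine ⟨child t, hchild t, ?_⟩
  have hsum := Finset.card_nsmul_le_sum Finset.univ _ _ ht
  have hunion : ∑ u, μ (madicCube m d (ℓ + 1) (child u)) ≤ μ (madicCube m d ℓ b) := by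
    have h := measure_iUnion (μ := μ)
      (fun u v huv => disjoint_madicCube (ℓ := ℓ + 1) hm (hinj.ne huv))
      fun u => measurableSet_madicCube _ _
    rw [tsum_fintype] at h
    exact h.ge.trans (measure_mono (Set.iUnion_subset hchild))
  simpa using hsum.trans hunion

theorem dist_le_of_mem_madicClosedCube {ℓ : ℤ} {b : Fin d → ℤ}
    {x y : EuclideanSpace ℝ (Fin d)} (hx : x ∈ madicClosedCube m d ℓ b)
    (hy : y ∈ madicClosedCube m d ℓ b) : dist x y ≤ d * (m : ℝ) ^ (-ℓ) := by
  have hq : (0 : ℝ) ≤ (m : ℝ) ^ (-ℓ) := by positivity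
  refine (EuclideanSpace.dist_eq x y).trans_le (Real.sqrt_le_iff.2 ⟨by positivity, ?_⟩)
  calc ∑ j, dist (x j) (y j) ^ 2 ≤ ∑ _j : Fin d, ((m : ℝ) ^ (-ℓ)) ^ 2 := by
        refine Finset.sum_le_sum fun j _ => pow_le_pow_left₀ dist_nonneg ?_ 2
        refine (Real.dist_le_of_mem_Icc (hx j) (hy j)).trans_eq (by ring)
    _ = d * ((m : ℝ) ^ (-ℓ)) ^ 2 := by simp
    _ ≤ (d * (m : ℝ) ^ (-ℓ)) ^ 2 := by
        rw [mul_pow]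
        refine mul_le_mul_of_nonneg_right ?_ (by positivity)
        exact_mod_cast Nat.le_self_pow two_ne_zero d

theorem madicCube_subset_madicClosedCube (ℓ : ℤ) (b : Fin d → ℤ) :
    madicCube m d ℓ b ⊆ madicClosedCube m d ℓ b :=
  fun _ hx j => Set.Ico_subset_Icc_self (hx j)

/-- Nested `m`-adic cubes have a common point in their closures. -/
theorem exists_mem_madicClosedCube_of_nested (hm : 0 < m) (c : ℕ → Fin d → ℤ)
    (hc : ∀ k : ℕ, madicCube m d ((k : ℤ) + 1) (c (k + 1)) ⊆ madicCube m d k (c k)) :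
    ∃ x, ∀ k : ℕ, x ∈ madicClosedCube m d k (c k) := by
  have hm' : (0 : ℝ) < m := by exact_mod_cast hm
  have hcorner := fun k j => (madicCube_succ_subset_iff hm).1 (hc k) j
  have hpos : ∀ ℓ : ℤ, (0 : ℝ) < (m : ℝ) ^ (-ℓ) := fun ℓ => by positivity
  have key : ∀ j, (⨆ k : ℕ, (m : ℝ) ^ (-(k : ℤ)) * (c k j : ℝ)) ∈
      ⋂ k : ℕ, Set.Icc ((m : ℝ) ^ (-(k : ℤ)) * (c k j : ℝ))
        ((m : ℝ) ^ (-(k : ℤ)) * (c k j + 1)) := by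
    intro j
    refine Monotone.ciSup_mem_iInter_Icc_of_antitone (monotone_nat_of_le_succ fun k => ?_)
      (antitone_nat_of_succ_le fun k => ?_) fun k => ?_
    · have h : (m : ℝ) * c k j ≤ c (k + 1) j := by exact_mod_cast (hcorner k j).1
      push_cast
      rw [zpow_neg_eq_mul_zpow_neg_add_one hm, mul_assoc]
      exact mul_le_mul_of_nonneg_left h (hpos _).le
    · have h : (c (k + 1) j : ℝ) + 1 ≤ m * (c k j + 1) := by exact_mod_cast (hcorner k j).2
      push_cast
      rw [zpow_neg_eq_mul_zpow_neg_add_one hm (k : ℤ), mul_assoc]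
      exact mul_le_mul_of_nonneg_left h (hpos _).le
    · exact mul_le_mul_of_nonneg_left (by linarith) (hpos _).le
  exact ⟨WithLp.toLp 2 fun j => ⨆ k : ℕ, (m : ℝ) ^ (-(k : ℤ)) * (c k j : ℝ),
    fun k j => Set.mem_iInter.1 (key j) k⟩

/-- A set of zero `s`-dimensional Hausdorff measure has covers by closed balls whose radii are
powers of `ρ`, with arbitrarily small sum of `s`-th powers of the radii. -/
theorem exists_closedBall_cover_of_hausdorffMeasure_eq_zero {X : Type*} [MetricSpace X]
    [MeasurableSpace X] [BorelSpace X] [Nonempty X] {S : Set X} {s : ℝ} (hs : 0 < s)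
    (hS : Measure.hausdorffMeasure s S = 0) {ρ : ℝ} (hρ₀ : 0 < ρ) (hρ₁ : ρ < 1)
    {ε : ℝ≥0∞} (hε : ε ≠ 0) :
    ∃ (c : ℕ → X) (k : ℕ → ℕ), S ⊆ ⋃ i, Metric.closedBall (c i) (ρ ^ k i) ∧
      ∑' i, ENNReal.ofReal ((ρ ^ s) ^ k i) ≤ ε := by
  have hρs : 0 < ρ ^ s := Real.rpow_pos_of_pos hρ₀ s
  set A : ℝ≥0∞ := ENNReal.ofReal (ρ ^ s) with hA
  have hA₀ : A ≠ 0 := by simpa [hA] using hρs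
  set D : ℝ≥0∞ := min 1 (A * ε) with hD
  have hD₀ : D / 2 ≠ 0 := by
    simp only [hD, ne_eq, ENNReal.div_eq_zero_iff, not_or]
    refine ⟨?_, by simp⟩
    have : 0 < min 1 (A * ε) := lt_min one_pos (pos_iff_ne_zero.2 (mul_ne_zero hA₀ hε))
    exact this.ne'
  obtain ⟨t, hSt, ht⟩ : ∃ t : ℕ → Set X, S ⊆ ⋃ i, t i ∧
      ∑' i, Metric.ediam (t i) ^ s < D / 2 := by
    rw [Measure.hausdorffMeasure_apply] at hS
    have h := (le_iSup₂ (f := fun (r : ℝ≥0∞) (_ : 0 < r) =>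
        ⨅ (t : ℕ → Set X) (_ : S ⊆ ⋃ n, t n) (_ : ∀ n, Metric.ediam (t n) ≤ r),
          ∑' n, ⨆ _ : (t n).Nonempty, Metric.ediam (t n) ^ s) 1 one_pos).trans_lt
      (hS.trans_lt (pos_iff_ne_zero.2 hD₀))
    simp only [iInf_lt_iff] at h
    obtain ⟨t, hSt, -, ht⟩ := h
    refine ⟨t, hSt, lt_of_le_of_lt (ENNReal.tsum_le_tsum fun i => ?_) ht⟩
    rcases (t i).eq_empty_or_nonempty with h | h
    · simp [h, hs]
    · simp [h]
  obtain ⟨η, hη, hηsum⟩ := ENNReal.exists_pos_sum_of_countable hD₀ ℕ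
  have hvsum : ∑' i, (Metric.ediam (t i) ^ s + η i) ≤ D := by
    rw [ENNReal.tsum_add, ← ENNReal.add_halves D]
    exact add_le_add ht.le hηsum.le
  have hk : ∀ i, ∃ k : ℕ, A * ENNReal.ofReal ((ρ ^ s) ^ k) ≤ Metric.ediam (t i) ^ s + η i ∧
      Metric.ediam (t i) ^ s + η i ≤ ENNReal.ofReal ((ρ ^ s) ^ k) := by
    intro i
    have hv₁ : Metric.ediam (t i) ^ s + η i ≤ 1 :=
      (ENNReal.le_tsum i).trans (hvsum.trans (min_le_left _ _))
    have hv₀ : Metric.ediam (t i) ^ s + η i ≠ 0 := by simp [(hη i).ne']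
    have hv_top := ne_top_of_le_ne_top ENNReal.one_ne_top hv₁
    obtain ⟨k, hk₁, hk₂⟩ := exists_nat_pow_near_of_lt_one (ENNReal.toReal_pos hv₀ hv_top)
      (ENNReal.toReal_le_of_le_ofReal one_pos.le (by simpa using hv₁)) hρs
      (Real.rpow_lt_one hρ₀.le hρ₁ hs)
    refine ⟨k, ?_, ENNReal.le_ofReal_iff_toReal_le hv_top (by positivity) |>.2 hk₂⟩
    rw [hA, ← ENNReal.ofReal_mul hρs.le, ← pow_succ']
    exact ENNReal.ofReal_le_of_le_toReal hk₁.le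
  choose k hk₁ hk₂ using hk
  have hc : ∀ i, ∃ c, t i ⊆ Metric.closedBall c (ρ ^ k i) := by
    intro i
    rcases (t i).eq_empty_or_nonempty with h | ⟨c, hc⟩
    · exact ⟨Classical.arbitrary X, by simp [h]⟩
    refine ⟨c, fun x hx => ?_⟩
    have hdiam : Metric.ediam (t i) ≤ ENNReal.ofReal (ρ ^ k i) := by
      rw [← ENNReal.rpow_le_rpow_iff hs, ENNReal.ofReal_rpow_of_pos (by positivity)]
      refine (le_self_add.trans (hk₂ i)).trans_eq ?_
      rw [← Real.rpow_natCast, ← Real.rpow_natCast, ← Real.rpow_mul hρ₀.le,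
        ← Real.rpow_mul hρ₀.le, mul_comm]
    rw [Metric.mem_closedBall, ← edist_le_ofReal (by positivity)]
    exact (Metric.edist_le_ediam_of_mem hx hc).trans hdiam
  choose c hc using hc
  refine ⟨c, k, hSt.trans (Set.iUnion_mono hc), ?_⟩
  rw [← ENNReal.mul_le_mul_iff_right hA₀ ENNReal.ofReal_ne_top, ← ENNReal.tsum_mul_left]
  exact ((ENNReal.tsum_le_tsum hk₁).trans hvsum).trans (min_le_right _ _)

/-- A set of zero `s`-dimensional Hausdorff measure admits a measure of small total mass which is
large on some `m`-adic cube around every point of the set. -/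
theorem exists_measure_madicCube_ge (hm : 2 ≤ m) {S : Set (EuclideanSpace ℝ (Fin d))}
    {s : ℝ} (hs : 0 < s) (hS : Measure.hausdorffMeasure s S = 0) {ε : ℝ≥0∞} (hε : ε ≠ 0) :
    ∃ μ : Measure (EuclideanSpace ℝ (Fin d)), μ Set.univ ≤ ε ∧
      ∀ x ∈ S, ∃ k : ℕ, ∀ b, x ∈ madicClosedCube m d k b →
        ENNReal.ofReal (((m : ℝ)⁻¹ ^ s) ^ k) ≤ μ (madicCube m d k b) := by
  have hm' : (2 : ℝ) ≤ m := by exact_mod_cast hm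
  have hρ₀ : (0 : ℝ) < (m : ℝ)⁻¹ := by positivity
  have hρ₁ : (m : ℝ)⁻¹ < 1 := inv_lt_one_of_one_lt₀ (by linarith)
  have hρ : ∀ k : ℕ, (m : ℝ) ^ (-(k : ℤ)) = (m : ℝ)⁻¹ ^ k := fun k => by simp
  generalize (m : ℝ)⁻¹ = ρ at hρ₀ hρ₁ hρ
  set K : ℝ≥0∞ := ENNReal.ofReal (((d : ℝ) + 1) ^ d) *
    volume (Metric.ball (0 : EuclideanSpace ℝ (Fin d)) 1) with hK
  have hK_top : K ≠ ∞ := ENNReal.mul_ne_top ENNReal.ofReal_ne_top measure_ball_lt_top.ne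
  obtain ⟨c, k, hSc, hsum⟩ := exists_closedBall_cover_of_hausdorffMeasure_eq_zero hs hS hρ₀ hρ₁
    (ENNReal.div_pos hε hK_top).ne'
  let V : ℕ → Set (EuclideanSpace ℝ (Fin d)) :=
    fun i => Metric.closedBall (c i) ((d + 1) * ρ ^ k i)
  let A : ℕ → ℝ≥0∞ := fun i => ENNReal.ofReal (ρ ^ k i) ^ d
  have hA₀ : ∀ i, A i ≠ 0 := fun i =>
    pow_ne_zero _ (ENNReal.ofReal_pos.2 (by positivity)).ne'
  have hA_top : ∀ i, A i ≠ ∞ := fun i => ENNReal.pow_ne_top ENNReal.ofReal_ne_top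
  have hV : ∀ i, volume (V i) = A i * K := by
    intro i
    simp only [V, A, hK]
    rw [Measure.addHaar_closedBall _ _ (by positivity), finrank_euclideanSpace_fin, mul_pow,
      ENNReal.ofReal_mul (by positivity), ← ENNReal.ofReal_pow (by positivity)]
    ring
  refine ⟨Measure.sum fun i =>
    (ENNReal.ofReal ((ρ ^ s) ^ k i) * (A i)⁻¹) • volume.restrict (V i), ?_, ?_⟩
  · rw [Measure.sum_apply _ MeasurableSet.univ]
    calc ∑' i, ((ENNReal.ofReal ((ρ ^ s) ^ k i) * (A i)⁻¹) • volume.restrict (V i)) Set.univ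
        = ∑' i, ENNReal.ofReal ((ρ ^ s) ^ k i) * K := by
          refine tsum_congr fun i => ?_
          rw [Measure.smul_apply, Measure.restrict_apply_univ, hV, smul_eq_mul, mul_assoc,
            ENNReal.inv_mul_cancel_left (fun h => absurd h (hA₀ i)) (fun h => absurd h (hA_top i))]
      _ ≤ ε / K * K := by
          rw [ENNReal.tsum_mul_right]
          gcongr
      _ ≤ ε := ENNReal.mul_le_of_le_div le_rfl
  · intro x hx
    obtain ⟨i, hi⟩ := Set.mem_iUnion.1 (hSc hx)
    refine ⟨k i, fun b hb => ?_⟩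
    have hsub : madicCube m d (k i) b ⊆ V i := by
      intro y hy
      have hyx := dist_le_of_mem_madicClosedCube (madicCube_subset_madicClosedCube _ _ hy) hb
      rw [hρ] at hyx
      rw [Metric.mem_closedBall] at hi ⊢
      linarith [dist_triangle y x (c i)]
    refine le_trans ?_ (Measure.le_sum_apply _ _ |>.trans' (ENNReal.le_tsum i))
    rw [Measure.smul_apply, Measure.restrict_eq_self _ hsub, volume_madicCube, hρ, smul_eq_mul,
      mul_assoc, ENNReal.inv_mul_cancel (hA₀ i) (hA_top i), mul_one]

theorem pow_half_mul_le {a : ℕ → ℝ≥0∞} {A : ℝ≥0∞} (ha : ∀ n, a (n + 1) ≤ a n)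
    (hodd : ∀ n, Odd n → A * a (n + 1) ≤ a n) (k : ℕ) : A ^ (k / 2) * a k ≤ a 0 := by
  induction k with
  | zero => simp
  | succ k ih =>
    refine le_trans ?_ ih
    rcases Nat.even_or_odd k with h | h
    · rw [show (k + 1) / 2 = k / 2 by have := Nat.even_iff.1 h; omega]
      gcongr
      exact ha k
    · rw [show (k + 1) / 2 = k / 2 + 1 by have := Nat.odd_iff.1 h; omega, pow_succ, mul_assoc]
      gcongr
      exact hodd k h

theorem one_le_mul_rpow_pow (hm : 2 ≤ m) {s : ℝ} (hs : s ≤ d / 2) (k : ℕ) :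
    (1 : ℝ≥0∞) ≤ m ^ d * ((m ^ d) ^ (k / 2) * ENNReal.ofReal (((m : ℝ)⁻¹ ^ s) ^ k)) := by
  have hm₁ : (1 : ℝ) ≤ m := by exact_mod_cast (by omega : 1 ≤ m)
  have hm₀ : (0 : ℝ) < m := by linarith
  have hk : (k : ℝ) ≤ 2 * (k / 2 : ℕ) + 1 := by
    exact_mod_cast (by omega : k ≤ 2 * (k / 2) + 1)
  have hreal : (1 : ℝ) ≤ m ^ d * ((m ^ d) ^ (k / 2) * ((m : ℝ)⁻¹ ^ s) ^ k) := by
    rw [Real.inv_rpow hm₀.le, ← Real.rpow_neg hm₀.le, ← Real.rpow_natCast _ k,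
      ← Real.rpow_mul hm₀.le, ← Real.rpow_natCast _ d, ← Real.rpow_natCast _ (k / 2),
      ← Real.rpow_mul hm₀.le, ← Real.rpow_add hm₀, ← Real.rpow_add hm₀]
    refine Real.one_le_rpow hm₁ ?_
    have hd : (0 : ℝ) ≤ d := by positivity
    nlinarith [mul_le_mul_of_nonneg_right hs (Nat.cast_nonneg (α := ℝ) k)]
  have h := ENNReal.ofReal_le_ofReal hreal
  rwa [ENNReal.ofReal_mul (by positivity), ENNReal.ofReal_mul (by positivity),
    ENNReal.ofReal_pow (by positivity), ENNReal.ofReal_pow (by positivity),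
    ENNReal.ofReal_pow (by positivity), ENNReal.ofReal_natCast, ENNReal.ofReal_one] at h

end

/-- If `S ⊆ ℝ^d` has Hausdorff dimension `< d/2` (Euclidean metric), then Player II has a
winning strategy in the `m`-adic cubes intersection game with target set `S`. -/
theorem playerII_wins_madic_cubes_game (m d : ℕ) (hm : 2 ≤ m) (hd : 1 ≤ d)
    (S : Set (EuclideanSpace ℝ (Fin d))) (hS : dimH S < (d : ℝ≥0∞) / 2) :
    ∃ (L : ℤ) (binit : Fin d → ℤ) (σ : List (Fin d → ℤ) → Fin d → ℤ),
      (∀ (b : ℕ → Fin d → ℤ) (n : ℕ), Odd n → CubeAdmUpTo m d L binit b n →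
        madicCube m d (L + n + 1) (σ (List.ofFn fun i : Fin n => b i)) ⊆
          madicCube m d (L + n) (b (n - 1))) ∧
      ∀ b : ℕ → Fin d → ℤ, (∀ k : ℕ, CubeAdmAt m d L binit b k) →
        (∀ n : ℕ, Odd n → b n = σ (List.ofFn fun i : Fin n => b i)) →
        ¬ (⋂ n : ℕ, madicClosedCube m d (L + n + 1) (b n)) ⊆ S := by
  have hm₀ : 0 < m := by omega
  obtain ⟨s, hSs, hsd⟩ := ENNReal.lt_iff_exists_nnreal_btwn.1 hS
  have hs₀ : (0 : ℝ) < s := by exact_mod_cast (zero_le).trans_lt hSs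
  have hs : (s : ℝ) ≤ d / 2 := by
    have h := ENNReal.toReal_mono
      (ENNReal.div_ne_top (ENNReal.natCast_ne_top d) two_ne_zero) hsd.le
    simpa using h
  have hmd_top : (m : ℝ≥0∞) ^ d ≠ ∞ := ENNReal.pow_ne_top (ENNReal.natCast_ne_top m)
  obtain ⟨ε, hε₀, hε⟩ := exists_between (ENNReal.inv_pos.2 hmd_top)
  obtain ⟨μ, hμ, hμS⟩ :=
    exists_measure_madicCube_ge hm hs₀ (hausdorffMeasure_of_dimH_lt hSs) hε₀.ne'
  choose child hchild_sub hchild_le using fun n : ℕ => exists_child_measure_le hm₀ μ n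
  let σ : List (Fin d → ℤ) → Fin d → ℤ := fun l => child l.length (l.getLastD 0)
  have hσ : ∀ (b : ℕ → Fin d → ℤ) (n : ℕ), Odd n →
      σ (List.ofFn fun i : Fin n => b i) = child n (b (n - 1)) := by
    intro b n hn
    obtain ⟨n, rfl⟩ : ∃ p, n = p + 1 := ⟨n - 1, by have := hn.pos; omega⟩
    simp only [σ]
    rw [List.ofFn_succ']
    simp
  refine ⟨0, 0, σ, fun b n hn _ => ?_, fun b hb hbσ hsub => ?_⟩
  · rw [hσ b n hn, zero_add]
    exact hchild_sub n _
  let c : ℕ → Fin d → ℤ := fun k => if k = 0 then 0 else b (k - 1)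
  have hc : ∀ k : ℕ, madicCube m d ((k : ℤ) + 1) (c (k + 1)) ⊆ madicCube m d k (c k) := by
    intro k
    have h := hb k
    rw [CubeAdmAt, zero_add] at h
    rcases Nat.eq_zero_or_pos k with rfl | hk
    · simpa [c] using h
    · simpa [c, hk.ne'] using h
  have hodd : ∀ n : ℕ, Odd n → (m : ℝ≥0∞) ^ d * μ (madicCube m d ((n + 1 : ℕ) : ℤ) (c (n + 1))) ≤
      μ (madicCube m d n (c n)) := by
    intro n hn
    have h := hchild_le n (b (n - 1))
    rw [← hσ b n hn, ← hbσ n hn] at h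
    simpa [c, hn.pos.ne'] using h
  obtain ⟨x, hx⟩ := exists_mem_madicClosedCube_of_nested hm₀ c hc
  have hxS : x ∈ S := hsub <| Set.mem_iInter.2 fun n => by simpa [c] using hx (n + 1)
  obtain ⟨k, hk⟩ := hμS x hxS
  have hdecay := pow_half_mul_le (a := fun n => μ (madicCube m d n (c n)))
    (fun n => measure_mono (by simpa using hc n)) hodd k
  refine absurd ?_ (not_le.2 hε)
  rw [← one_div]
  refine ENNReal.div_le_of_le_mul' ?_
  calc (1 : ℝ≥0∞)
      ≤ m ^ d * ((m ^ d) ^ (k / 2) * ENNReal.ofReal (((m : ℝ)⁻¹ ^ (s : ℝ)) ^ k)) :=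
        one_le_mul_rpow_pow hm hs k
    _ ≤ m ^ d * ((m ^ d) ^ (k / 2) * μ (madicCube m d k (c k))) := by
        gcongr
        exact hk _ (hx k)
    _ ≤ m ^ d * ε := by
        gcongr
        exact hdecay.trans ((measure_mono (Set.subset_univ _)).trans hμ)
end
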